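/- arXiv:2111.06444 — 2 statements merged into one kernel-verified Lean document; each statement's English description precedes it below -/
import Mathlib

section
/- Let H1, H2, Np > 0, N ≥ 0, and set a = H1 + H2 + N. Let φ, ψ : [0,∞) → [0,∞) be continuous and strictly increasing with φ(0) = 0 and ψ(0) = 0. Consider the feasible set F of triples (ρ, R1, R2) ∈ [0,1] × [0,∞) × [0,∞) satisfying R1 ≤ (1/2)·log₂(1 + (1−ρ)H1/((1−ρ)N + Np)), R2 ≤ (1/2)·log₂(1 + (1−ρ)H2/((1−ρ)N + Np)), R1 + R2 ≤ (1/2)·log₂(1 + (1−ρ)(H1+H2)/((1−ρ)N + Np)), and φ(R1 + R2) ≤ ψ(ρ·a). If (ρ*, R1*, R2*) ∈ F maximizes R1 + R2 over F, then both R1* + R2* = (1/2)·log₂(1 + (1−ρ*)(H1+H2)/((1−ρ*)N + Np)) and φ(R1* + R2*) = ψ(ρ*·a); that is, the whole harvested energy is consumed at the information-decoding block and the sum-rate constraint is tight. -/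
/-!
At a fixed splitting factor `ρ` a maximal sum rate exhausts either the sum-rate bound or the energy
budget, because `φ` is continuous. If only one of them were exhausted, moving `ρ` slightly would
loosen that one (the budget grows with `ρ`, the rate bound decreases) while continuity keeps the
other slack; this would make both slack at once. The individual rate bounds never matter for the
sum rate: `log (1 + x)` is subadditive, so any sum rate below the sum-rate bound can be shared
between the two users.
-/

open Set

section TradeOff

variable {α β γ : Type*} [LinearOrder α] [TopologicalSpace α] [OrderTopology α] [DenselyOrdered α]
  [LinearOrder β] [TopologicalSpace β] [OrderClosedTopology β]

theorem le_or_le_of_continuousWithinAt_of_forall_le {φ : α → β} {s c : α} {d : β}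
    (hφ : ContinuousWithinAt φ (Ioi s) s)
    (hmax : ∀ t, s ≤ t → t ≤ c → φ t ≤ d → t ≤ s) : c ≤ s ∨ d ≤ φ s := by
  by_contra! ⟨hsc, hsd⟩
  have := left_nhdsWithin_Ioo_neBot hsc
  have hφsc : ContinuousWithinAt φ (Ioo s c) s := hφ.mono Ioo_subset_Ioi_self
  obtain ⟨t, htd, hst, htc⟩ :=
    ((hφsc.eventually_lt_const hsd).and eventually_mem_nhdsWithin).exists
  exact (hmax t hst.le htc.le htd.le).not_gt hst

theorem le_and_le_of_strictAntiOn_of_strictMonoOn [LinearOrder γ] [TopologicalSpace γ]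
    [OrderClosedTopology γ] {l u x : α} {g : α → β} {e : α → γ} {s : β} {d : γ}
    (hgc : ContinuousOn g (Icc l u)) (hg : StrictAntiOn g (Icc l u))
    (hec : ContinuousOn e (Icc l u)) (he : StrictMonoOn e (Icc l u))
    (hgu : g u ≤ s) (hel : e l ≤ d) (hx : x ∈ Icc l u) (hsx : s ≤ g x) (hdx : d ≤ e x)
    (h : ∀ y ∈ Icc l u, g y ≤ s ∨ e y ≤ d) : g x ≤ s ∧ e x ≤ d := by
  constructor <;> by_contra! hlt
  · have hxu : x < u := hx.2.lt_of_ne fun hxu => (hxu ▸ hlt).not_ge hgu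
    have hsub : Ioo x u ⊆ Icc l u := fun y hy => ⟨hx.1.trans hy.1.le, hy.2.le⟩
    have := left_nhdsWithin_Ioo_neBot hxu
    obtain ⟨y, hsy, hy⟩ :=
      ((((hgc x hx).mono hsub).eventually_const_lt hlt).and eventually_mem_nhdsWithin).exists
    have hdy : d < e y := hdx.trans_lt (he hx (hsub hy) hy.1)
    exact (h y (hsub hy)).elim hsy.not_ge hdy.not_ge
  · have hlx : l < x := hx.1.lt_of_ne' fun hxl => (hxl ▸ hlt).not_ge hel
    have hsub : Ioo l x ⊆ Icc l u := fun y hy => ⟨hy.1.le, hy.2.le.trans hx.2⟩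
    have := right_nhdsWithin_Ioo_neBot hlx
    obtain ⟨y, hdy, hy⟩ :=
      ((((hec x hx).mono hsub).eventually_const_lt hlt).and eventually_mem_nhdsWithin).exists
    have hsy : s < g y := hsx.trans_lt (hg (hsub hy) hx hy.2)
    exact (h y (hsub hy)).elim hsy.not_ge hdy.not_ge

end TradeOff

theorem logb_one_add_add_le {b x y : ℝ} (hb : 1 < b) (hx : 0 ≤ x) (hy : 0 ≤ y) :
    Real.logb b (1 + (x + y)) ≤ Real.logb b (1 + x) + Real.logb b (1 + y) := by
  rw [← Real.logb_mul (by positivity) (by positivity)]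
  exact Real.logb_le_logb_of_le hb (by positivity) (by nlinarith [mul_nonneg hx hy])

/-- The signal-to-noise ratio at the decoder of a signal of received power `H` when the fraction
`1 - ρ` of the received signal is decoded: the signal and the receiver noise `N` are both scaled by
`1 - ρ`, the processing noise `Np` is not. -/
noncomputable def psSNR (N Np H ρ : ℝ) : ℝ :=
  (1 - ρ) * H / ((1 - ρ) * N + Np)

/-- The Gaussian capacity, in bits, at the signal-to-noise ratio `psSNR N Np H ρ`. -/
noncomputable def psRate (N Np H ρ : ℝ) : ℝ :=
  (1 / 2) * Real.logb 2 (1 + psSNR N Np H ρ)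

/-- Feasibility of `(ρ, R₁, R₂)` for the two-user power-splitting multiple access channel with
simultaneous decoding: the rates lie in the capacity region left by the splitting factor `ρ`, and
the decoding cost `φ (R₁ + R₂)` is covered by the power `ψ (ρ * a)` harvested from the fraction
`ρ` of the input power `a`. -/
def IsPSFeasible (H₁ H₂ N Np a : ℝ) (φ ψ : ℝ → ℝ) (ρ R₁ R₂ : ℝ) : Prop :=
  ρ ∈ Icc (0 : ℝ) 1 ∧ 0 ≤ R₁ ∧ 0 ≤ R₂ ∧ R₁ ≤ psRate N Np H₁ ρ ∧ R₂ ≤ psRate N Np H₂ ρ ∧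
    R₁ + R₂ ≤ psRate N Np (H₁ + H₂) ρ ∧ φ (R₁ + R₂) ≤ ψ (ρ * a)

section Rate

variable {N Np H H₁ H₂ ρ : ℝ}

theorem one_sub_mul_add_pos (hN : 0 ≤ N) (hNp : 0 < Np) (hρ : ρ ≤ 1) : 0 < (1 - ρ) * N + Np :=
  add_pos_of_nonneg_of_pos (mul_nonneg (sub_nonneg.2 hρ) hN) hNp

theorem psSNR_nonneg (hN : 0 ≤ N) (hNp : 0 < Np) (hH : 0 ≤ H) (hρ : ρ ≤ 1) :
    0 ≤ psSNR N Np H ρ :=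
  div_nonneg (mul_nonneg (sub_nonneg.2 hρ) hH) (one_sub_mul_add_pos hN hNp hρ).le

theorem one_add_psSNR_pos (hN : 0 ≤ N) (hNp : 0 < Np) (hH : 0 ≤ H) (hρ : ρ ≤ 1) :
    0 < 1 + psSNR N Np H ρ :=
  add_pos_of_pos_of_nonneg one_pos (psSNR_nonneg hN hNp hH hρ)

theorem psSNR_add : psSNR N Np (H₁ + H₂) ρ = psSNR N Np H₁ ρ + psSNR N Np H₂ ρ := by
  simp only [psSNR, mul_add, add_div]

theorem strictAntiOn_psSNR (hN : 0 ≤ N) (hNp : 0 < Np) (hH : 0 < H) :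
    StrictAntiOn (psSNR N Np H) (Iic 1) := by
  intro r hr t ht hrt
  rw [psSNR, psSNR, div_lt_div_iff₀ (one_sub_mul_add_pos hN hNp ht) (one_sub_mul_add_pos hN hNp hr)]
  linear_combination mul_pos (sub_pos.2 hrt) (mul_pos hH hNp)

theorem continuousOn_psSNR (hN : 0 ≤ N) (hNp : 0 < Np) : ContinuousOn (psSNR N Np H) (Iic 1) :=
  .div (by fun_prop) (by fun_prop) fun _ hρ => (one_sub_mul_add_pos hN hNp hρ).ne'

theorem psRate_one : psRate N Np H 1 = 0 := by
  simp [psRate, psSNR]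

theorem psRate_nonneg (hN : 0 ≤ N) (hNp : 0 < Np) (hH : 0 ≤ H) (hρ : ρ ≤ 1) :
    0 ≤ psRate N Np H ρ :=
  mul_nonneg one_half_pos.le <|
    Real.logb_nonneg one_lt_two (le_add_of_nonneg_right (psSNR_nonneg hN hNp hH hρ))

theorem psRate_add_le (hN : 0 ≤ N) (hNp : 0 < Np) (hH₁ : 0 ≤ H₁) (hH₂ : 0 ≤ H₂) (hρ : ρ ≤ 1) :
    psRate N Np (H₁ + H₂) ρ ≤ psRate N Np H₁ ρ + psRate N Np H₂ ρ := by
  rw [psRate, psRate, psRate, psSNR_add, ← mul_add]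
  exact mul_le_mul_of_nonneg_left (logb_one_add_add_le one_lt_two
    (psSNR_nonneg hN hNp hH₁ hρ) (psSNR_nonneg hN hNp hH₂ hρ)) one_half_pos.le

theorem strictAntiOn_psRate (hN : 0 ≤ N) (hNp : 0 < Np) (hH : 0 < H) :
    StrictAntiOn (psRate N Np H) (Iic 1) := by
  intro r hr t ht hrt
  have hSNR : 1 + psSNR N Np H t < 1 + psSNR N Np H r :=
    add_lt_add_right (strictAntiOn_psSNR hN hNp hH hr ht hrt) 1
  exact mul_lt_mul_of_pos_left
    (Real.logb_lt_logb one_lt_two (one_add_psSNR_pos hN hNp hH.le ht) hSNR) one_half_pos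

theorem continuousOn_psRate (hN : 0 ≤ N) (hNp : 0 < Np) (hH : 0 ≤ H) :
    ContinuousOn (psRate N Np H) (Iic 1) := by
  have hlog : ContinuousOn (fun ρ => Real.log (1 + psSNR N Np H ρ)) (Iic 1) :=
    (continuousOn_const.add (continuousOn_psSNR hN hNp)).log fun _ hρ =>
      (one_add_psSNR_pos hN hNp hH hρ).ne'
  exact (hlog.div_const _).const_mul _

open scoped Pointwise in
theorem exists_isPSFeasible_add_eq {a T : ℝ} {φ ψ : ℝ → ℝ} (hN : 0 ≤ N) (hNp : 0 < Np)
    (hH₁ : 0 ≤ H₁) (hH₂ : 0 ≤ H₂) (hρ : ρ ∈ Icc (0 : ℝ) 1) (hT : 0 ≤ T)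
    (hTrate : T ≤ psRate N Np (H₁ + H₂) ρ) (hTcost : φ T ≤ ψ (ρ * a)) :
    ∃ R₁ R₂, IsPSFeasible H₁ H₂ N Np a φ ψ ρ R₁ R₂ ∧ R₁ + R₂ = T := by
  have hmem : T ∈ Icc 0 (psRate N Np H₁ ρ) + Icc 0 (psRate N Np H₂ ρ) := by
    rw [Icc_add_Icc (psRate_nonneg hN hNp hH₁ hρ.2) (psRate_nonneg hN hNp hH₂ hρ.2), add_zero]
    exact ⟨hT, hTrate.trans (psRate_add_le hN hNp hH₁ hH₂ hρ.2)⟩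
  obtain ⟨R₁, ⟨hR₁, hR₁rate⟩, R₂, ⟨hR₂, hR₂rate⟩, rfl⟩ := hmem
  exact ⟨R₁, R₂, ⟨hρ, hR₁, hR₂, hR₁rate, hR₂rate, hTrate, hTcost⟩, rfl⟩

end Rate

theorem stmt_3_general {H₁ H₂ N Np a : ℝ} {φ ψ : ℝ → ℝ} (hH₁ : 0 < H₁) (hH₂ : 0 < H₂)
    (hNp : 0 < Np) (hN : 0 ≤ N) (ha : 0 < a) (hφc : ContinuousOn φ (Ici 0))
    (hψc : ContinuousOn ψ (Ici 0)) (hψ : StrictMonoOn ψ (Ici 0)) (hψφ : ∀ R, 0 ≤ R → ψ 0 ≤ φ R)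
    {ρ R₁ R₂ : ℝ} (hfeas : IsPSFeasible H₁ H₂ N Np a φ ψ ρ R₁ R₂)
    (hmax : ∀ ρ' R₁' R₂', IsPSFeasible H₁ H₂ N Np a φ ψ ρ' R₁' R₂' → R₁' + R₂' ≤ R₁ + R₂) :
    R₁ + R₂ = psRate N Np (H₁ + H₂) ρ ∧ φ (R₁ + R₂) = ψ (ρ * a) := by
  obtain ⟨hρ, hR₁, hR₂, -, -, hrate, hcost⟩ := hfeas
  have hR : 0 ≤ R₁ + R₂ := add_nonneg hR₁ hR₂
  have hharvest : MapsTo (· * a) (Icc 0 1) (Ici 0) := fun r hr => mul_nonneg hr.1 ha.le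
  have hnot_slack : ∀ r ∈ Icc (0 : ℝ) 1,
      psRate N Np (H₁ + H₂) r ≤ R₁ + R₂ ∨ ψ (r * a) ≤ φ (R₁ + R₂) := by
    refine fun r hr => le_or_le_of_continuousWithinAt_of_forall_le
      ((hφc _ hR).mono (Ioi_subset_Ici hR)) fun T hRT hTrate hTcost => ?_
    obtain ⟨R₁', R₂', hfeas', rfl⟩ :=
      exists_isPSFeasible_add_eq hN hNp hH₁.le hH₂.le hr (hR.trans hRT) hTrate hTcost
    exact hmax r R₁' R₂' hfeas'
  have htight := le_and_le_of_strictAntiOn_of_strictMonoOn (e := fun r => ψ (r * a))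
    ((continuousOn_psRate hN hNp (add_pos hH₁ hH₂).le).mono Icc_subset_Iic_self)
    ((strictAntiOn_psRate hN hNp (add_pos hH₁ hH₂)).mono Icc_subset_Iic_self)
    (hψc.comp (by fun_prop) hharvest)
    (hψ.comp ((strictMono_mul_right_of_pos ha).strictMonoOn _) hharvest)
    (psRate_one.trans_le hR) (by simpa only [zero_mul] using hψφ _ hR) hρ hrate hcost hnot_slack
  exact ⟨hrate.antisymm htight.1, hcost.antisymm htight.2⟩

/-- Classical PS-SWIPT MAC, simultaneous decoding (Lemma 2): at a maximizer of
the sum rate over the feasible set, the sum-rate constraint and the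
decoding-cost constraint are both tight: the whole harvested energy is
consumed at the information-decoding block. -/
theorem stmt_3 (H1 H2 Np N : ℝ) (hH1 : 0 < H1) (hH2 : 0 < H2) (hNp : 0 < Np) (hN : 0 ≤ N)
    (a : ℝ) (ha : a = H1 + H2 + N)
    (φ ψ : ℝ → ℝ)
    (hφc : ContinuousOn φ (Set.Ici 0)) (hψc : ContinuousOn ψ (Set.Ici 0))
    (hφmap : ∀ x : ℝ, 0 ≤ x → 0 ≤ φ x) (hψmap : ∀ x : ℝ, 0 ≤ x → 0 ≤ ψ x)
    (hφ : StrictMonoOn φ (Set.Ici 0)) (hψ : StrictMonoOn ψ (Set.Ici 0))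
    (hφ0 : φ 0 = 0) (hψ0 : ψ 0 = 0)
    (Feas : ℝ → ℝ → ℝ → Prop)
    (hFeas : ∀ ρ R1 R2 : ℝ, Feas ρ R1 R2 ↔
      ρ ∈ Set.Icc (0 : ℝ) 1 ∧ 0 ≤ R1 ∧ 0 ≤ R2 ∧
      R1 ≤ (1/2) * Real.logb 2 (1 + (1 - ρ) * H1 / ((1 - ρ) * N + Np)) ∧
      R2 ≤ (1/2) * Real.logb 2 (1 + (1 - ρ) * H2 / ((1 - ρ) * N + Np)) ∧
      R1 + R2 ≤ (1/2) * Real.logb 2 (1 + (1 - ρ) * (H1 + H2) / ((1 - ρ) * N + Np)) ∧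
      φ (R1 + R2) ≤ ψ (ρ * a))
    (ρs R1s R2s : ℝ) (hfeas : Feas ρs R1s R2s)
    (hmax : ∀ ρ R1 R2 : ℝ, Feas ρ R1 R2 → R1 + R2 ≤ R1s + R2s) :
    R1s + R2s = (1/2) * Real.logb 2 (1 + (1 - ρs) * (H1 + H2) / ((1 - ρs) * N + Np)) ∧
    φ (R1s + R2s) = ψ (ρs * a) :=
  stmt_3_general hH1 hH2 hNp hN (ha ▸ by positivity) hφc hψc hψ
    (fun R hR => hψ0.trans_le (hφmap R hR)) ((hFeas ρs R1s R2s).1 hfeas)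
    fun ρ R1 R2 h => hmax ρ R1 R2 ((hFeas ρ R1 R2).2 h)
end

section
/- Let H1, H2, Np > 0, N ≥ 0, and set a = H1 + H2 + N. Let φ, ψ : [0,∞) → [0,∞) be continuous and strictly increasing with φ(0) = 0, ψ(0) = 0, and ψ(a) > 0. Let F be the set of triples (ρ, R1, R2) ∈ [0,1] × [0,∞) × [0,∞) satisfying R1 ≤ (1/2)·log₂(1 + (1−ρ)H1/((1−ρ)N + Np)), R2 ≤ (1/2)·log₂(1 + (1−ρ)H2/((1−ρ)N + Np)), R1 + R2 ≤ (1/2)·log₂(1 + (1−ρ)(H1+H2)/((1−ρ)N + Np)), and φ(R1 + R2) ≤ ψ(ρ·a), and let ρ̃ ∈ (0,1) be the unique solution of φ( (1/2)·log₂(1 + (1−ρ)(a−N)/((1−ρ)N + Np)) ) = ψ(ρ·a). Then the supremum of R1 + R2 over F is attained and equals (1/2)·log₂(1 + (1−ρ̃)(a−N)/((1−ρ̃)N + Np)). -/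
/-!
The sum-rate bound decreases in the splitting factor, while the power harvested for decoding
increases with it. Below the crossing point `ρ̃` the sum rate is limited by the harvested power, and
above it by the sum-rate bound; either way it is at most the bound at `ρ̃`. The value there is
attained at the rate pair in which the first user transmits at its single-user limit.
-/

open Set

theorem le_of_antitoneOn_of_cost_le {α β γ : Type*} [LinearOrder α] [LinearOrder β] [Preorder γ]
    {s : Set α} {u : Set β} {bound : α → β} {cost : β → γ} {budget : α → γ}
    (hbound : AntitoneOn bound s) (hcost : StrictMonoOn cost u) (hbudget : MonotoneOn budget s)
    {t x : α} {r : β} (ht : t ∈ s) (hx : x ∈ s) (htu : bound t ∈ u) (hru : r ∈ u)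
    (hcross : budget t ≤ cost (bound t)) (hr : r ≤ bound x) (hr_cost : cost r ≤ budget x) :
    r ≤ bound t := by
  rcases le_total t x with htx | hxt
  · exact hr.trans (hbound ht hx htx)
  · have hcost_le : cost r ≤ cost (bound t) := hr_cost.trans ((hbudget hx ht hxt).trans hcross)
    exact (hcost.le_iff_le hru htu).1 hcost_le

/-- The capacity `½ log₂(1 + x)`, in bits per real channel use, of a Gaussian channel with
signal-to-noise ratio `x`. -/
noncomputable def gaussianCapacity (x : ℝ) : ℝ := (1 / 2) * Real.logb 2 (1 + x)

theorem gaussianCapacity_monotoneOn : MonotoneOn gaussianCapacity (Ioi (-1)) := by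
  intro x hx y _ hxy
  have hlog : Real.logb 2 (1 + x) ≤ Real.logb 2 (1 + y) :=
    Real.logb_le_logb_of_le one_lt_two (by linarith [mem_Ioi.1 hx]) (by linarith)
  exact mul_le_mul_of_nonneg_left hlog (by norm_num)

theorem gaussianCapacity_nonneg {x : ℝ} (hx : 0 ≤ x) : 0 ≤ gaussianCapacity x :=
  mul_nonneg (by norm_num) (Real.logb_nonneg one_lt_two (by linarith))

theorem gaussianCapacity_add_le {x y : ℝ} (hx : 0 ≤ x) (hy : 0 ≤ y) :
    gaussianCapacity (x + y) ≤ gaussianCapacity x + gaussianCapacity y := by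
  have hprod : 1 + (x + y) ≤ (1 + x) * (1 + y) := by linarith [mul_nonneg hx hy]
  have hlog : Real.logb 2 (1 + (x + y)) ≤ Real.logb 2 (1 + x) + Real.logb 2 (1 + y) :=
    calc
      Real.logb 2 (1 + (x + y)) ≤ Real.logb 2 ((1 + x) * (1 + y)) :=
        Real.logb_le_logb_of_le one_lt_two (by linarith) hprod
      _ = Real.logb 2 (1 + x) + Real.logb 2 (1 + y) :=
        Real.logb_mul (by linarith) (by linarith)
  unfold gaussianCapacity
  linarith

theorem exists_rates_add_eq_gaussianCapacity {x y : ℝ} (hx : 0 ≤ x) (hy : 0 ≤ y) :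
    ∃ R1 R2 : ℝ, 0 ≤ R1 ∧ 0 ≤ R2 ∧ R1 ≤ gaussianCapacity x ∧ R2 ≤ gaussianCapacity y ∧
      R1 + R2 = gaussianCapacity (x + y) := by
  have hmono : gaussianCapacity x ≤ gaussianCapacity (x + y) :=
    gaussianCapacity_monotoneOn (mem_Ioi.2 (by linarith)) (mem_Ioi.2 (by linarith)) (by linarith)
  exact ⟨gaussianCapacity x, gaussianCapacity (x + y) - gaussianCapacity x,
    gaussianCapacity_nonneg hx, sub_nonneg.2 hmono, le_rfl,
    sub_le_iff_le_add'.2 (gaussianCapacity_add_le hx hy), add_sub_cancel _ _⟩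

/-- The signal-to-noise ratio at the decoder when a fraction `ρ` of the received signal is diverted
to energy harvesting: `H` is the received signal power, `N` the receiver noise, which is split along
with the signal, and `Np` the processing noise, which is added after the split. -/
noncomputable def splitSNR (N Np H ρ : ℝ) : ℝ := (1 - ρ) * H / ((1 - ρ) * N + Np)

section splitSNR

variable {N Np H ρ : ℝ}

theorem splitSNR_add (N Np H1 H2 ρ : ℝ) :
    splitSNR N Np (H1 + H2) ρ = splitSNR N Np H1 ρ + splitSNR N Np H2 ρ := by
  simp only [splitSNR, mul_add, add_div]

theorem splitSNR_nonneg (hN : 0 ≤ N) (hNp : 0 ≤ Np) (hH : 0 ≤ H) (hρ : ρ ≤ 1) :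
    0 ≤ splitSNR N Np H ρ :=
  have hρ' : 0 ≤ 1 - ρ := sub_nonneg.2 hρ
  div_nonneg (mul_nonneg hρ' hH) (add_nonneg (mul_nonneg hρ' hN) hNp)

theorem splitSNR_antitoneOn (hN : 0 ≤ N) (hNp : 0 < Np) (hH : 0 ≤ H) :
    AntitoneOn (splitSNR N Np H) (Iic 1) := by
  intro ρ hρ σ hσ hρσ
  have hρ' : 0 ≤ 1 - ρ := sub_nonneg.2 hρ
  have hσ' : 0 ≤ 1 - σ := sub_nonneg.2 hσ
  have hcross : (1 - ρ) * H * ((1 - σ) * N + Np) - (1 - σ) * H * ((1 - ρ) * N + Np) =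
      (σ - ρ) * (H * Np) := by ring
  have hdiff : 0 ≤ (σ - ρ) * (H * Np) := mul_nonneg (sub_nonneg.2 hρσ) (by positivity)
  unfold splitSNR
  rw [div_le_div_iff₀ (by positivity) (by positivity)]
  linarith [hcross, hdiff]

theorem gaussianCapacity_splitSNR_antitoneOn (hN : 0 ≤ N) (hNp : 0 < Np) (hH : 0 ≤ H) :
    AntitoneOn (fun ρ ↦ gaussianCapacity (splitSNR N Np H ρ)) (Iic 1) :=
  gaussianCapacity_monotoneOn.comp_AntitoneOn (splitSNR_antitoneOn hN hNp hH) fun _ hρ ↦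
    mem_Ioi.2 (neg_one_lt_zero.trans_le (splitSNR_nonneg hN hNp.le hH hρ))

end splitSNR

/-- The triples `(ρ, R1, R2)` of a splitting factor and two rates that lie in the capacity region of
the power-splitting multiple-access channel and whose decoding cost `φ (R1 + R2)` is covered by the
energy `ψ (ρ * a)` harvested from the received power `a`. -/
def feasibleTriples (H1 H2 N Np a : ℝ) (φ ψ : ℝ → ℝ) : Set (ℝ × ℝ × ℝ) :=
  {(ρ, R1, R2) : ℝ × ℝ × ℝ | ρ ∈ Icc (0 : ℝ) 1 ∧ 0 ≤ R1 ∧ 0 ≤ R2 ∧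
    R1 ≤ gaussianCapacity (splitSNR N Np H1 ρ) ∧
    R2 ≤ gaussianCapacity (splitSNR N Np H2 ρ) ∧
    R1 + R2 ≤ gaussianCapacity (splitSNR N Np (H1 + H2) ρ) ∧
    φ (R1 + R2) ≤ ψ (ρ * a)}

section feasibleTriples

variable {H1 H2 N Np a ρt : ℝ} {φ ψ : ℝ → ℝ}

theorem exists_feasibleTriples_add_eq (hH1 : 0 ≤ H1) (hH2 : 0 ≤ H2) (hN : 0 ≤ N) (hNp : 0 ≤ Np)
    (hρt : ρt ∈ Icc (0 : ℝ) 1)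
    (hcost : φ (gaussianCapacity (splitSNR N Np (H1 + H2) ρt)) ≤ ψ (ρt * a)) :
    ∃ R1 R2 : ℝ, (ρt, R1, R2) ∈ feasibleTriples H1 H2 N Np a φ ψ ∧
      gaussianCapacity (splitSNR N Np (H1 + H2) ρt) = R1 + R2 := by
  obtain ⟨R1, R2, hR1, hR2, hR1_le, hR2_le, hsum⟩ :=
    exists_rates_add_eq_gaussianCapacity (splitSNR_nonneg hN hNp hH1 hρt.2)
      (splitSNR_nonneg hN hNp hH2 hρt.2)
  rw [← splitSNR_add] at hsum
  exact ⟨R1, R2, ⟨hρt, hR1, hR2, hR1_le, hR2_le, hsum.le, hsum ▸ hcost⟩, hsum.symm⟩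

theorem add_le_gaussianCapacity_of_mem_feasibleTriples (hH : 0 ≤ H1 + H2) (hN : 0 ≤ N)
    (hNp : 0 < Np) (ha : 0 ≤ a) (hφ : StrictMonoOn φ (Ici 0)) (hψ : MonotoneOn ψ (Ici 0))
    (hρt : ρt ∈ Icc (0 : ℝ) 1)
    (hcost : ψ (ρt * a) ≤ φ (gaussianCapacity (splitSNR N Np (H1 + H2) ρt)))
    {ρ R1 R2 : ℝ} (hmem : (ρ, R1, R2) ∈ feasibleTriples H1 H2 N Np a φ ψ) :
    R1 + R2 ≤ gaussianCapacity (splitSNR N Np (H1 + H2) ρt) := by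
  obtain ⟨hρ, hR1, hR2, -, -, hsum, hsum_cost⟩ := hmem
  have hbudget : MonotoneOn (fun ρ ↦ ψ (ρ * a)) (Icc 0 1) :=
    hψ.comp ((monotone_mul_right_of_nonneg ha).monotoneOn _) fun _ hx ↦ mul_nonneg hx.1 ha
  exact le_of_antitoneOn_of_cost_le
    ((gaussianCapacity_splitSNR_antitoneOn hN hNp hH).mono Icc_subset_Iic_self) hφ hbudget hρt hρ
    (gaussianCapacity_nonneg (splitSNR_nonneg hN hNp.le hH hρt.2)) (add_nonneg hR1 hR2)
    hcost hsum hsum_cost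

theorem stmt_5_general (hH1 : 0 ≤ H1) (hH2 : 0 ≤ H2) (hN : 0 ≤ N) (hNp : 0 < Np) (ha : 0 ≤ a)
    (hφ : StrictMonoOn φ (Ici 0)) (hψ : MonotoneOn ψ (Ici 0)) (hρt : ρt ∈ Icc (0 : ℝ) 1)
    (heq : φ (gaussianCapacity (splitSNR N Np (H1 + H2) ρt)) = ψ (ρt * a)) :
    IsGreatest
      {s : ℝ | ∃ ρ R1 R2 : ℝ, (ρ, R1, R2) ∈ feasibleTriples H1 H2 N Np a φ ψ ∧ s = R1 + R2}
      (gaussianCapacity (splitSNR N Np (H1 + H2) ρt)) := by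
  refine ⟨⟨ρt, exists_feasibleTriples_add_eq hH1 hH2 hN hNp.le hρt heq.le⟩, ?_⟩
  rintro _ ⟨ρ, R1, R2, hmem, rfl⟩
  exact add_le_gaussianCapacity_of_mem_feasibleTriples (add_nonneg hH1 hH2) hN hNp ha hφ hψ hρt
    heq.ge hmem

end feasibleTriples

/-- Classical PS-SWIPT MAC, simultaneous decoding (Theorem 2, optimal sum
rate): if `ρ̃ ∈ (0,1)` is the unique solution of
`φ((1/2)log₂(1 + (1−ρ)(a−N)/((1−ρ)N+Np))) = ψ(ρ·a)`, then the supremum of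
`R1 + R2` over the feasible set is attained and equals
`(1/2)log₂(1 + (1−ρ̃)(a−N)/((1−ρ̃)N+Np))`. -/
theorem stmt_5 (H1 H2 Np N : ℝ) (hH1 : 0 < H1) (hH2 : 0 < H2) (hNp : 0 < Np) (hN : 0 ≤ N)
    (a : ℝ) (ha : a = H1 + H2 + N)
    (φ ψ : ℝ → ℝ)
    (hφc : ContinuousOn φ (Set.Ici 0)) (hψc : ContinuousOn ψ (Set.Ici 0))
    (hφmap : ∀ x : ℝ, 0 ≤ x → 0 ≤ φ x) (hψmap : ∀ x : ℝ, 0 ≤ x → 0 ≤ ψ x)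
    (hφ : StrictMonoOn φ (Set.Ici 0)) (hψ : StrictMonoOn ψ (Set.Ici 0))
    (hφ0 : φ 0 = 0) (hψ0 : ψ 0 = 0) (hψa : 0 < ψ a)
    (F : Set (ℝ × ℝ × ℝ))
    (hF : ∀ ρ R1 R2 : ℝ, (ρ, R1, R2) ∈ F ↔
      ρ ∈ Set.Icc (0 : ℝ) 1 ∧ 0 ≤ R1 ∧ 0 ≤ R2 ∧
      R1 ≤ (1/2) * Real.logb 2 (1 + (1 - ρ) * H1 / ((1 - ρ) * N + Np)) ∧
      R2 ≤ (1/2) * Real.logb 2 (1 + (1 - ρ) * H2 / ((1 - ρ) * N + Np)) ∧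
      R1 + R2 ≤ (1/2) * Real.logb 2 (1 + (1 - ρ) * (H1 + H2) / ((1 - ρ) * N + Np)) ∧
      φ (R1 + R2) ≤ ψ (ρ * a))
    (ρt : ℝ) (hρt : ρt ∈ Set.Ioo (0 : ℝ) 1)
    (heq : φ ((1/2) * Real.logb 2 (1 + (1 - ρt) * (a - N) / ((1 - ρt) * N + Np))) = ψ (ρt * a))
    (huniq : ∀ ρ ∈ Set.Icc (0 : ℝ) 1,
      φ ((1/2) * Real.logb 2 (1 + (1 - ρ) * (a - N) / ((1 - ρ) * N + Np))) = ψ (ρ * a) →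
      ρ = ρt) :
    IsGreatest {s : ℝ | ∃ ρ R1 R2 : ℝ, (ρ, R1, R2) ∈ F ∧ s = R1 + R2}
      ((1/2) * Real.logb 2 (1 + (1 - ρt) * (a - N) / ((1 - ρt) * N + Np))) := by
  obtain rfl : F = feasibleTriples H1 H2 N Np a φ ψ := Set.ext fun _ ↦ hF _ _ _
  rw [show a - N = H1 + H2 by linarith] at heq ⊢
  exact stmt_5_general hH1.le hH2.le hN hNp (by linarith) hφ hψ.monotoneOn
    (Set.Ioo_subset_Icc_self hρt) heq
end
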